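/- Let (Q, Σ) be a DFA and let c be a natural number. Suppose there exists a word u over Σ such that |Qu| ≤ |Q| − c. Then for every word w over Σ with |Qw| ≤ |Q| − c + 1 there exists a word m over Σ with |m| ≤ c and |Q(w·m·w)| ≤ |Q| − c, where w·m·w denotes the concatenation of the words w, m, w. -/

import Mathlib

/-- The image of a finite set of states `R` under a word (list of letters),
where each letter `s` acts on states via `act s`. -/
def wordImage {Q A : Type*} [DecidableEq Q] (act : A → Q → Q) (R : Finset Q) :
    List A → Finset Q
  | [] => R
  | s :: w => wordImage act (R.image (act s)) w

/-!
Represent the set `R = Qw` by the formal sum `v` of its elements in `ℚ[Q]`, on which the letters act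
linearly, and let `T` be the linear extension of the action of `w`. Since `|R| ≤ |Qw|`, the word `w`
maps `Rm` onto `Qw` exactly when `T (v m)` is the formal sum of `Qw`. So if no short word `m`
compresses, then `T (v m)` is constant on short words, and a dimension count shows that it is
constant on all words. The count is the linear form of Moore's state-minimization argument: the
subspaces of vectors that `T` annihilates after every word of length at most `n` decrease with `n`,
start at `ker T`, and stop for good as soon as they repeat, hence are constant from
`n = dim ker T = |Q| - |Qw|` on. They are therefore invariant under the letters from then on, and
contain `v s - v` for each letter `s`, hence `v m - v` for every word `m`.
-/

open Finset Module

/-- The transformation of the states induced by a word, reading letters from left to right; it is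
used both for an automaton and for its linearization. -/
def wordMap {Q A : Type*} (act : A → Q → Q) (m : List A) (q : Q) : Q :=
  m.foldl (fun p s => act s p) q

section WordMap

variable {Q A : Type*} (act : A → Q → Q)

@[simp]
lemma wordMap_nil (q : Q) : wordMap act [] q = q := rfl

@[simp]
lemma wordMap_cons (s : A) (m : List A) (q : Q) :
    wordMap act (s :: m) q = wordMap act m (act s q) := rfl

@[simp]
lemma wordMap_append (m m' : List A) (q : Q) :
    wordMap act (m ++ m') q = wordMap act m' (wordMap act m q) :=
  List.foldl_append

variable [DecidableEq Q]

lemma wordImage_eq_image (R : Finset Q) (m : List A) :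
    wordImage act R m = R.image (wordMap act m) := by
  induction m generalizing R with
  | nil => exact image_id.symm
  | cons s m ih => rw [wordImage, ih, image_image]; rfl

lemma wordImage_append (R : Finset Q) (m m' : List A) :
    wordImage act R (m ++ m') = wordImage act (wordImage act R m) m' := by
  simp only [wordImage_eq_image, image_image]
  exact image_congr fun q _ => wordMap_append act m m' q

lemma wordImage_mono {R S : Finset Q} (h : R ⊆ S) (m : List A) :
    wordImage act R m ⊆ wordImage act S m := by
  simpa only [wordImage_eq_image] using image_subset_image h

lemma card_wordImage_le (R : Finset Q) (m : List A) : #(wordImage act R m) ≤ #R :=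
  wordImage_eq_image act R m ▸ card_image_le

end WordMap

section LinearAutomaton

variable {K V W A : Type*} [DivisionRing K] [AddCommGroup V] [Module K V]
  [AddCommGroup W] [Module K W]

lemma submodule_eq_of_antitone_of_finrank_le {D : ℕ → Submodule K V} [FiniteDimensional K (D 0)]
    (hD : Antitone D) (hstab : ∀ n, D n = D (n + 1) → D (n + 1) = D (n + 2)) {d n : ℕ}
    (hd : finrank K (D 0) ≤ d) (hn : d ≤ n) : D n = D d := by
  have hfin (i : ℕ) : FiniteDimensional K (D i) :=
    Submodule.finiteDimensional_of_le (hD i.zero_le)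
  have hanti {i j : ℕ} (hij : i ≤ j) : finrank K (D j) ≤ finrank K (D i) :=
    Submodule.finrank_mono (hD hij)
  have hle (i : ℕ) : finrank K (D i) ≤ d := (hanti i.zero_le).trans hd
  have hcodim : d - finrank K (D n) = d - finrank K (D d) := by
    refine Nat.stabilises_of_monotone (f := fun i => d - finrank K (D i))
      (fun i j hij => Nat.sub_le_sub_left (hanti hij) d) (fun i => Nat.sub_le _ _)
      (fun i hi => ?_) hn
    have hrank : finrank K (D (i + 1)) = finrank K (D i) :=
      ((tsub_right_inj (hle i) (hle (i + 1))).1 hi).symm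
    have hDi : D (i + 1) = D i := Submodule.eq_of_le_of_finrank_eq (hD i.le_succ) hrank
    rw [hstab i hDi.symm]
  exact Submodule.eq_of_le_of_finrank_eq (hD hn) ((tsub_right_inj (hle n) (hle d)).1 hcodim)

lemma wordMap_sub (L : A → V →ₗ[K] V) (m : List A) (x y : V) :
    wordMap (fun s => L s) m (x - y) = wordMap (fun s => L s) m x - wordMap (fun s => L s) m y := by
  induction m generalizing x y with
  | nil => rfl
  | cons s m ih => simp only [wordMap_cons, map_sub, ih]

/-- The unobservable subspaces of the linear automaton with transitions `L` and output map `T`: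
the vectors whose output vanishes after every word of length at most `n`. -/
def unobservable (T : V →ₗ[K] W) (L : A → V →ₗ[K] V) : ℕ → Submodule K V
  | 0 => T.ker
  | n + 1 => T.ker ⊓ ⨅ s, (unobservable T L n).comap (L s)

variable {T : V →ₗ[K] W} {L : A → V →ₗ[K] V}

lemma mem_unobservable_succ {n : ℕ} {x : V} :
    x ∈ unobservable T L (n + 1) ↔ T x = 0 ∧ ∀ s, L s x ∈ unobservable T L n := by
  simp [unobservable]

lemma mem_unobservable_iff {n : ℕ} {x : V} :
    x ∈ unobservable T L n ↔ ∀ m : List A, m.length ≤ n → T (wordMap (fun s => L s) m x) = 0 := by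
  induction n generalizing x with
  | zero => simp [unobservable]
  | succ n ih =>
    simp only [mem_unobservable_succ, ih]
    refine ⟨?_, fun h => ⟨h [] (Nat.zero_le _), fun s m hm => h (s :: m) (Nat.succ_le_succ hm)⟩⟩
    rintro ⟨hx, hs⟩ (_ | ⟨s, m⟩) hm
    · exact hx
    · exact hs s m (Nat.le_of_succ_le_succ hm)

lemma unobservable_antitone : Antitone (unobservable T L) := fun _ _ hij _ hx =>
  mem_unobservable_iff.2 fun m hm => mem_unobservable_iff.1 hx m (hm.trans hij)

lemma unobservable_succ_congr {i j : ℕ} (h : unobservable T L i = unobservable T L j) :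
    unobservable T L (i + 1) = unobservable T L (j + 1) :=
  Submodule.ext fun x => by simp only [mem_unobservable_succ, h]

variable [FiniteDimensional K T.ker]

lemma unobservable_finrank_ker_add_one :
    unobservable T L (finrank K T.ker + 1) = unobservable T L (finrank K T.ker) := by
  have hzero : unobservable T L 0 = T.ker := rfl
  have : FiniteDimensional K (unobservable T L 0) := by rwa [hzero]
  exact submodule_eq_of_antitone_of_finrank_le unobservable_antitone
    (fun _ h => unobservable_succ_congr h) (by rw [hzero]) (Nat.le_succ _)

lemma map_mem_unobservable_finrank_ker {x : V} (hx : x ∈ unobservable T L (finrank K T.ker))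
    (s : A) : L s x ∈ unobservable T L (finrank K T.ker) := by
  rw [← unobservable_finrank_ker_add_one] at hx
  exact (mem_unobservable_succ.1 hx).2 s

theorem map_wordMap_eq_of_forall_length_le {x : V} {y : W}
    (h : ∀ m : List A, m.length ≤ finrank K T.ker + 1 → T (wordMap (fun s => L s) m x) = y)
    (m : List A) : T (wordMap (fun s => L s) m x) = y := by
  set U := unobservable T L (finrank K T.ker)
  have hletter (s : A) : L s x - x ∈ U := mem_unobservable_iff.2 fun m hm => by
    rw [wordMap_sub, map_sub, sub_eq_zero, h m (by omega)]
    exact h (s :: m) (Nat.succ_le_succ hm)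
  have hword : wordMap (fun s => L s) m x - x ∈ U := by
    induction m using List.reverseRecOn with
    | nil => simp
    | append_singleton m s ih =>
      simpa using U.add_mem (map_mem_unobservable_finrank_ker ih s) (hletter s)
  have hker : wordMap (fun s => L s) m x - x ∈ T.ker := unobservable_antitone (Nat.zero_le _) hword
  rw [LinearMap.sub_mem_ker_iff.1 hker]
  exact h [] (Nat.zero_le _)

end LinearAutomaton

section Linearization

variable {Q A β : Type*}

/-- The formal sum of the elements of a finite set, as a vector of the free
`ℚ`-module; in characteristic zero, a pushforward of it vanishes only where no element is sent. -/
noncomputable def formalSum (R : Finset Q) : Q →₀ ℚ := ∑ q ∈ R, Finsupp.single q 1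

lemma mapDomain_formalSum (g : Q → β) (R : Finset Q) :
    (formalSum R).mapDomain g = ∑ q ∈ R, Finsupp.single (g q) 1 := by
  simp only [formalSum, Finsupp.mapDomain_finsetSum, Finsupp.mapDomain_single]

lemma mapDomain_formalSum_apply_ne_zero_iff [DecidableEq β] (g : Q → β) (R : Finset Q) (b : β) :
    (formalSum R).mapDomain g b ≠ 0 ↔ b ∈ R.image g := by
  have hcount : (formalSum R).mapDomain g b = #{q ∈ R | g q = b} := by
    simp [mapDomain_formalSum, Finsupp.finsetSum_apply, Finsupp.single_apply]
  rw [hcount, Nat.cast_ne_zero, card_ne_zero, filter_nonempty_iff, mem_image]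

lemma mapDomain_formalSum_eq_iff [DecidableEq β] {g : Q → β} {R : Finset Q} {S : Finset β}
    (h : #R ≤ #S) : (formalSum R).mapDomain g = formalSum S ↔ R.image g = S := by
  constructor
  · intro heq
    ext b
    rw [← mapDomain_formalSum_apply_ne_zero_iff, heq]
    simpa using mapDomain_formalSum_apply_ne_zero_iff id S b
  · rintro rfl
    have hinj : Set.InjOn g R := injOn_of_card_image_eq (card_image_le.antisymm h)
    rw [mapDomain_formalSum, formalSum, sum_image hinj]

lemma wordMap_lmapDomain (M K : Type*) [Semiring K] [AddCommMonoid M] [Module K M]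
    (act : A → Q → Q) (m : List A) (x : Q →₀ M) :
    wordMap (fun s => Finsupp.lmapDomain M K (act s)) m x = x.mapDomain (wordMap act m) := by
  induction m generalizing x with
  | nil => exact Finsupp.mapDomain_id.symm
  | cons s m ih =>
    rw [wordMap_cons, ih, Finsupp.lmapDomain_apply, ← Finsupp.mapDomain_comp]
    rfl

variable [Fintype Q] [DecidableEq β]

lemma finrank_range_lmapDomain (K : Type*) [DivisionRing K] (f : Q → β) :
    finrank K (Finsupp.lmapDomain K K f).range = #(univ.image f) := by
  have hrange : (Finsupp.lmapDomain K K f).range = Finsupp.supported K K (univ.image f) := by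
    rw [LinearMap.range_eq_map, ← Finsupp.supported_univ, Finsupp.lmapDomain_supported, coe_image,
      coe_univ]
  rw [hrange, (Finsupp.supportedEquivFinsupp _).finrank_eq]
  exact (finrank_finsupp_self K).trans (Fintype.card_coe _)

lemma finrank_ker_lmapDomain (K : Type*) [DivisionRing K] (f : Q → β) :
    finrank K (Finsupp.lmapDomain K K f).ker = Fintype.card Q - #(univ.image f) := by
  have hsum := (Finsupp.lmapDomain K K f).finrank_range_add_finrank_ker
  rw [finrank_range_lmapDomain, finrank_finsupp_self] at hsum
  omega

end Linearization

section Compression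

variable {Q A : Type*} [Fintype Q] [DecidableEq Q] {act : A → Q → Q}

theorem exists_length_le_image_wordImage_ne {β : Type*} [DecidableEq β] {f : Q → β} {R : Finset Q}
    (hR : #R ≤ #(univ.image f)) {u : List A} (hu : (wordImage act R u).image f ≠ univ.image f) :
    ∃ m : List A, m.length ≤ Fintype.card Q - #(univ.image f) + 1 ∧
      (wordImage act R m).image f ≠ univ.image f := by
  set T := Finsupp.lmapDomain ℚ ℚ f
  have honto (m : List A) : (wordImage act R m).image f = univ.image f ↔
      T (wordMap (fun s => Finsupp.lmapDomain ℚ ℚ (act s)) m (formalSum R)) =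
        formalSum (univ.image f) := by
    rw [wordImage_eq_image, image_image, ← mapDomain_formalSum_eq_iff hR, Finsupp.mapDomain_comp,
      wordMap_lmapDomain, Finsupp.lmapDomain_apply]
  contrapose! hu with hshort
  simp only [← finrank_ker_lmapDomain ℚ, honto] at hshort ⊢
  exact map_wordMap_eq_of_forall_length_le hshort u

theorem exists_length_le_card_wordImage_append_lt {R : Finset Q} {u w : List A}
    (hR : #R ≤ #(wordImage act univ w)) (hu : #(wordImage act R u) < #(wordImage act univ w)) :
    ∃ m : List A, m.length ≤ Fintype.card Q - #(wordImage act univ w) + 1 ∧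
      #(wordImage act R (m ++ w)) < #(wordImage act univ w) := by
  have hne : wordImage act (wordImage act R u) w ≠ wordImage act univ w := fun h =>
    hu.not_ge (h ▸ card_wordImage_le act _ w)
  rw [wordImage_eq_image act univ w] at hR hne ⊢
  rw [wordImage_eq_image act _ w] at hne
  obtain ⟨m, hm, hmw⟩ := exists_length_le_image_wordImage_ne hR hne
  refine ⟨m, hm, card_lt_card ?_⟩
  rw [wordImage_append, wordImage_eq_image act _ w]
  exact (image_subset_image (subset_univ _)).ssubset_of_ne hmw

end Compression

theorem stmt_2 {Q A : Type*} [Fintype Q] [DecidableEq Q] (act : A → Q → Q)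
    (c : ℕ)
    (h : ∃ u : List A, (wordImage act Finset.univ u).card ≤ Fintype.card Q - c)
    (w : List A)
    (hw : (wordImage act Finset.univ w).card ≤ Fintype.card Q - c + 1) :
    ∃ m : List A, m.length ≤ c ∧
      (wordImage act Finset.univ (w ++ m ++ w)).card ≤ Fintype.card Q - c := by
  obtain ⟨u, hu⟩ := h
  rcases Nat.le_or_eq_of_le_succ hw with hle | heq
  · refine ⟨[], Nat.zero_le c, ?_⟩
    rw [List.append_nil, wordImage_append]
    exact (card_wordImage_le act _ w).trans hle
  · have hwu : (wordImage act (wordImage act univ w) u).card ≤ Fintype.card Q - c :=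
      (card_le_card (wordImage_mono act (subset_univ _) u)).trans hu
    have hwQ : (wordImage act univ w).card ≤ Fintype.card Q := card_le_univ _
    obtain ⟨m, hm, hlt⟩ :=
      exists_length_le_card_wordImage_append_lt (R := wordImage act univ w) le_rfl (u := u)
        (by omega)
    refine ⟨m, by omega, ?_⟩
    rw [List.append_assoc, wordImage_append]
    omega
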